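/- arXiv:1404.3949 — 2 statements merged into one kernel-verified Lean document; each statement's English description precedes it below -/
import Mathlib

section
/- Let k ≥ 2 be even, a = k/2, and let L ⊆ ℤ⁴ be the ℤ-span of v₁ = (-a-1, a+1, a, -a+1), v₂ = (a-1, a+1, a+1, -a), v₃ = (-a-1, -a+1, a+1, -a), v₄ = (-a, -a, a, a+1). Then for every x ∈ ℤ⁴ there exists w ∈ L with ‖x - w‖₁ ≤ k, where ‖y‖₁ = |y₁| + |y₂| + |y₃| + |y₄|. (Equivalently, S_k + L = ℤ⁴, where S_k is the set of points of ℤ⁴ at l¹-distance at most k from the origin.) -/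
/-!
Call `x` a *hole* of radius `r` if `‖x‖₁ = r + 1` while every point of `L` is further than `r`
from `x`. Since a step towards the origin lowers the norm by one, a lattice without holes of
radius `r` covers `ℤ⁴` with radius `r`, so it suffices to exclude holes of radius `2a = k`.

The lattice is a perturbed body-centred cubic one. It contains four vectors `2a eᵢ + O(1)`, the
rows of a skew-symmetric matrix plus `diag(2a, 2a, 2a + 1, 2a + 1)`, and it contains half of their
sum, hence all sixteen corners `½ ∑ ± frame i`. There is one corner in each orthant, and by
skew-symmetry the norm of each is half the trace, `4a + 1`. If `x` lies in the box spanned by the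
origin and a corner `v`, then `‖x‖₁ + ‖x - v‖₁ = 4a + 1`, so one of the two distances is at most
`2a`. Thus a hole lies outside all these boxes; but then one of its coordinates is so large that
subtracting a frame vector, or the sum of the first two, brings it within `2a` of the origin. An
isometry of the lattice exchanging the first two coordinates reduces the case analysis to
`|x₁| ≤ x₀`.
-/

/-- The Manhattan norm on `ℤ^ι`. -/
def l1Norm {ι : Type*} [Fintype ι] (x : ι → ℤ) : ℤ := ∑ i, |x i|

/-- `x` is a hole of radius `r` of `L`: it is just outside the ball of radius `r` around the
origin, and outside all the balls of radius `r` around the points of `L`. -/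
def IsHole {ι : Type*} [Fintype ι] (L : Submodule ℤ (ι → ℤ)) (r : ℤ) (x : ι → ℤ) : Prop :=
  l1Norm x = r + 1 ∧ ∀ w ∈ L, r < l1Norm (x - w)

section L1Norm

variable {ι : Type*} [Fintype ι]

theorem l1Norm_nonneg (x : ι → ℤ) : 0 ≤ l1Norm x :=
  Finset.sum_nonneg fun i _ ↦ abs_nonneg (x i)

theorem l1Norm_zero : l1Norm (0 : ι → ℤ) = 0 := by simp [l1Norm]

theorem l1Norm_neg (x : ι → ℤ) : l1Norm (-x) = l1Norm x := by simp [l1Norm]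

theorem l1Norm_add_le (x y : ι → ℤ) : l1Norm (x + y) ≤ l1Norm x + l1Norm y := by
  simp only [l1Norm, ← Finset.sum_add_distrib]
  exact Finset.sum_le_sum fun i _ ↦ abs_add_le (x i) (y i)

theorem l1Norm_add_l1Norm_sub {x v : ι → ℤ} (h : ∀ i, x i ∈ Set.uIcc 0 (v i)) :
    l1Norm x + l1Norm (x - v) = l1Norm v := by
  simp only [l1Norm, ← Finset.sum_add_distrib, Pi.sub_apply]
  refine Finset.sum_congr rfl fun i _ ↦ ?_
  have := h i
  grind [Set.mem_uIcc]

theorem abs_sub_sign {n : ℤ} (hn : n ≠ 0) : |n - n.sign| = |n| - 1 := by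
  rcases hn.lt_or_gt with h | h
  · grind [Int.sign_eq_neg_one_of_neg h]
  · grind [Int.sign_eq_one_of_pos h]

theorem exists_l1Norm_sub_eq_sub_one {x : ι → ℤ} (hx : x ≠ 0) :
    ∃ s : ι → ℤ, l1Norm s = 1 ∧ l1Norm (x - s) = l1Norm x - 1 := by
  classical
  obtain ⟨i, hi⟩ := Function.ne_iff.mp hx
  refine ⟨Pi.single i (x i).sign, ?_, ?_⟩
  · simp [l1Norm, Pi.single_apply, apply_ite, Int.abs_sign_of_ne_zero hi]
  · have hrest : ∀ j ∈ Finset.univ.erase i,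
        |x j - (Pi.single i (x i).sign : ι → ℤ) j| = |x j| :=
      fun j hj ↦ by simp [Finset.ne_of_mem_erase hj]
    simp only [l1Norm, Pi.sub_apply, ← Finset.add_sum_erase _ _ (Finset.mem_univ i),
      Finset.sum_congr rfl hrest, Pi.single_eq_same, abs_sub_sign hi]
    ring

theorem l1Norm_fin_four (x : Fin 4 → ℤ) : l1Norm x = |x 0| + |x 1| + |x 2| + |x 3| :=
  Fin.sum_univ_four _

end L1Norm

section Hole

variable {ι : Type*} [Fintype ι] {L : Submodule ℤ (ι → ℤ)} {r : ℤ}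

theorem exists_mem_l1Norm_sub_le (hr : 0 ≤ r) (hL : ∀ x, ¬ IsHole L r x) (x : ι → ℤ) :
    ∃ w ∈ L, l1Norm (x - w) ≤ r := by
  induction hn : (l1Norm x).toNat using Nat.strong_induction_on generalizing x with | _ n ih
  by_cases hx : x = 0
  · exact ⟨0, L.zero_mem, by rwa [hx, sub_zero, l1Norm_zero]⟩
  obtain ⟨s, hs, hxs⟩ := exists_l1Norm_sub_eq_sub_one hx
  have hlt : (l1Norm (x - s)).toNat < n := by
    have := l1Norm_nonneg (x - s)
    omega
  obtain ⟨w, hw, hsub⟩ := ih _ hlt (x - s) rfl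
  have hle : l1Norm (x - w) ≤ r + 1 :=
    calc l1Norm (x - w) = l1Norm ((x - s - w) + s) := by congr 1; abel
      _ ≤ l1Norm (x - s - w) + l1Norm s := l1Norm_add_le _ _
      _ ≤ r + 1 := by rw [hs]; gcongr
  rcases hle.lt_or_eq with hwx | heq
  · exact ⟨w, hw, Int.lt_add_one_iff.mp hwx⟩
  · obtain ⟨u, hu, hxu⟩ : ∃ u ∈ L, l1Norm (x - w - u) ≤ r := by
      simpa [IsHole, heq] using hL (x - w)
    exact ⟨w + u, add_mem hw hu, by rwa [← sub_sub]⟩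

namespace IsHole

variable {x : ι → ℤ}

theorem map (h : IsHole L r x) (f : (ι → ℤ) ≃ₗ[ℤ] (ι → ℤ))
    (hf : ∀ y, l1Norm (f y) = l1Norm y) (hL : ∀ w ∈ L, f.symm w ∈ L) : IsHole L r (f x) := by
  refine ⟨(hf x).trans h.1, fun w hw ↦ ?_⟩
  have := h.2 _ (hL w hw)
  rwa [← hf, map_sub, f.apply_symm_apply] at this

theorem neg (h : IsHole L r x) : IsHole L r (-x) :=
  h.map (LinearEquiv.neg ℤ) l1Norm_neg fun _ ↦ L.neg_mem

theorem exists_notMem_uIcc (h : IsHole L r x) {v : ι → ℤ} (hv : v ∈ L)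
    (hnorm : l1Norm v = 2 * r + 1) : ∃ i, x i ∉ Set.uIcc 0 (v i) := by
  by_contra! hbox
  linarith [h.1, h.2 v hv, l1Norm_add_l1Norm_sub hbox]

theorem sum_abs_eq {L : Submodule ℤ (Fin 4 → ℤ)} {x : Fin 4 → ℤ} (h : IsHole L r x) :
    |x 0| + |x 1| + |x 2| + |x 3| = r + 1 :=
  (l1Norm_fin_four x).symm.trans h.1

theorem lt_sum_abs_sub {L : Submodule ℤ (Fin 4 → ℤ)} {x w : Fin 4 → ℤ} (h : IsHole L r x)
    (hw : w ∈ L) : r < |x 0 - w 0| + |x 1 - w 1| + |x 2 - w 2| + |x 3 - w 3| :=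
  (h.2 w hw).trans_eq (l1Norm_fin_four _)

end IsHole

end Hole

/-- The four given vectors `v₁, v₂, v₃, v₄` spanning the lattice, indexed from `0`. -/
def latticeGenerator (a : ℤ) : Fin 4 → Fin 4 → ℤ :=
  ![![-a - 1, a + 1, a, -a + 1], ![a - 1, a + 1, a + 1, -a], ![-a - 1, -a + 1, a + 1, -a],
    ![-a, -a, a, a + 1]]

/-- The lattice `L_k` for `k = 2 * a`. -/
def coveringLattice (a : ℤ) : Submodule ℤ (Fin 4 → ℤ) :=
  Submodule.span ℤ (Set.range (latticeGenerator a))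

/-- The vectors of `coveringLattice a` playing the role of `2 * a` times the standard basis. -/
def frame (a : ℤ) : Fin 4 → Fin 4 → ℤ :=
  ![![2 * a, 0, 1, -1], ![0, 2 * a, -1, 1], ![-1, 1, 2 * a + 1, 1], ![1, -1, -1, 2 * a + 1]]

/-- Half the sum of the frame vectors, minus a combination of them. The corners proper are those
with `t i ∈ {0, 1}`, which equal `½ ∑ ± frame a i`, with sign `-` where `t i = 1`. -/
def corner (a : ℤ) (t : Fin 4 → ℤ) : Fin 4 → ℤ :=
  ![a, a, a, a + 1] - ∑ i, t i • frame a i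

/-- An isometry of `coveringLattice a`, exchanging the roles of the first two coordinates. -/
def swap : (Fin 4 → ℤ) ≃ₗ[ℤ] (Fin 4 → ℤ) :=
  LinearEquiv.ofInvolutive
    { toFun x := ![x 1, x 0, -x 2, -x 3]
      map_add' x y := by ext i; fin_cases i <;> simp <;> ring
      map_smul' c x := by ext i; fin_cases i <;> simp }
    fun x ↦ by ext i; fin_cases i <;> simp

section Lattice

variable (a : ℤ)

theorem coveringLattice_eq_span : coveringLattice a =
    Submodule.span ℤ {![-a - 1, a + 1, a, -a + 1], ![a - 1, a + 1, a + 1, -a],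
      ![-a - 1, -a + 1, a + 1, -a], ![-a, -a, a, a + 1]} := by
  simp only [coveringLattice, latticeGenerator, Matrix.range_cons, Matrix.range_empty,
    Set.union_empty, Set.singleton_union]

theorem sum_smul_latticeGenerator_mem (n : Fin 4 → ℤ) :
    ∑ i, n i • latticeGenerator a i ∈ coveringLattice a :=
  (Submodule.mem_span_range_iff_exists_fun ℤ).mpr ⟨n, rfl⟩

theorem frame_mem (i : Fin 4) : frame a i ∈ coveringLattice a := by
  convert sum_smul_latticeGenerator_mem a
    (![![-1, 1, 0, 0], ![1, 0, -1, 0], ![0, 1, 0, 1], ![0, 0, -1, 1]] i) using 1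
  ext j
  fin_cases i <;> fin_cases j <;> simp [frame, latticeGenerator, Fin.sum_univ_four] <;> ring

theorem corner_mem (t : Fin 4 → ℤ) : corner a t ∈ coveringLattice a := by
  refine sub_mem ?_ (sum_mem fun i _ ↦ Submodule.smul_mem _ _ (frame_mem a i))
  convert sum_smul_latticeGenerator_mem a ![0, 1, -1, 1] using 1
  ext j
  fin_cases j <;> simp [latticeGenerator, Fin.sum_univ_four]
  ring

theorem corner_eq (t : Fin 4 → ℤ) : corner a t =
    ![a - 2 * a * t 0 + t 2 - t 3, a - 2 * a * t 1 - t 2 + t 3,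
      a - t 0 + t 1 - (2 * a + 1) * t 2 + t 3, a + 1 + t 0 - t 1 - t 2 - (2 * a + 1) * t 3] := by
  ext j
  fin_cases j <;> simp [corner, frame, Fin.sum_univ_four] <;> ring

theorem l1Norm_corner {a : ℤ} (ha : 1 ≤ a) {t : Fin 4 → ℤ} (ht : ∀ i, t i = 0 ∨ t i = 1) :
    l1Norm (corner a t) = 4 * a + 1 := by
  simp only [l1Norm_fin_four, corner_eq, Matrix.cons_val]
  rcases ht 0 with h0 | h0 <;> rcases ht 1 with h1 | h1 <;> rcases ht 2 with h2 | h2 <;>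
    rcases ht 3 with h3 | h3 <;> rw [h0, h1, h2, h3] <;> grind

theorem swap_apply (x : Fin 4 → ℤ) : swap x = ![x 1, x 0, -x 2, -x 3] := rfl

theorem swap_mem {w : Fin 4 → ℤ} (hw : w ∈ coveringLattice a) : swap w ∈ coveringLattice a := by
  suffices coveringLattice a ≤ (coveringLattice a).comap swap.toLinearMap from this hw
  refine Submodule.span_le.mpr (Set.range_subset_iff.mpr fun i ↦ ?_)
  change swap (latticeGenerator a i) ∈ coveringLattice a
  convert sum_smul_latticeGenerator_mem a
    (![![-1, 0, 0, 0], ![0, 0, -1, 0], ![0, -1, 0, 0], ![0, -1, 1, -1]] i) using 1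
  ext j
  fin_cases i <;> fin_cases j <;> simp [swap_apply, latticeGenerator, Fin.sum_univ_four] <;> ring

theorem l1Norm_swap (x : Fin 4 → ℤ) : l1Norm (swap x) = l1Norm x := by
  simp [l1Norm_fin_four, swap_apply, add_comm]

end Lattice

namespace IsHole

variable {a : ℤ} {x : Fin 4 → ℤ}

theorem apply_zero_le (h : IsHole (coveringLattice a) (2 * a) x) (ha : 1 ≤ a) (hx : 0 ≤ x 0) :
    x 0 + (if 0 < x 2 then 1 else 0) + (if x 3 < 0 then 1 else 0) ≤ a + 1 := by
  have hsum := h.sum_abs_eq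
  have hframe := h.lt_sum_abs_sub (frame_mem a 0)
  -- For `a = 1`, subtracting `frame a 0` does not bring `x = (3, 0, 0, 0)` within `2 * a`.
  have hfar := h.lt_sum_abs_sub (add_mem (frame_mem a 0) (corner_mem a ![0, 0, 1, 0]))
  simp only [frame, corner_eq, Pi.add_apply, Matrix.cons_val] at hframe hfar
  grind

theorem apply_zero_add_apply_one_le (h : IsHole (coveringLattice a) (2 * a) x)
    (hx₀ : 0 < x 0) (hx₁ : 0 < x 1) : x 0 + x 1 ≤ 2 * a := by
  have hsum := h.sum_abs_eq
  have hframe := h.lt_sum_abs_sub (add_mem (frame_mem a 0) (frame_mem a 1))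
  simp only [frame, Pi.add_apply, Matrix.cons_val] at hframe
  grind

theorem apply_two_le (h : IsHole (coveringLattice a) (2 * a) x) (ha : 1 ≤ a) (hx : 0 ≤ x 2) :
    x 2 + (if x 0 < 0 then 1 else 0) + (if 0 < x 1 then 1 else 0) +
      (if 0 < x 3 then 1 else 0) ≤ a + 2 := by
  have hsum := h.sum_abs_eq
  have hframe := h.lt_sum_abs_sub (frame_mem a 2)
  simp only [frame, Matrix.cons_val] at hframe
  grind

theorem apply_three_le (h : IsHole (coveringLattice a) (2 * a) x) (ha : 1 ≤ a) (hx : 0 ≤ x 3) :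
    x 3 + (if 0 < x 0 then 1 else 0) + (if x 1 < 0 then 1 else 0) +
      (if x 2 < 0 then 1 else 0) ≤ a + 2 := by
  have hsum := h.sum_abs_eq
  have hframe := h.lt_sum_abs_sub (frame_mem a 3)
  simp only [frame, Matrix.cons_val] at hframe
  grind

theorem notMem_corner_box (h : IsHole (coveringLattice a) (2 * a) x) (ha : 1 ≤ a)
    (t₀ t₁ t₂ t₃ : ℤ) (ht : ∀ t ∈ [t₀, t₁, t₂, t₃], t = 0 ∨ t = 1) :
    ¬ (x 0 ∈ Set.uIcc 0 (a - 2 * a * t₀ + t₂ - t₃) ∧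
      x 1 ∈ Set.uIcc 0 (a - 2 * a * t₁ - t₂ + t₃) ∧
      x 2 ∈ Set.uIcc 0 (a - t₀ + t₁ - (2 * a + 1) * t₂ + t₃) ∧
      x 3 ∈ Set.uIcc 0 (a + 1 + t₀ - t₁ - t₂ - (2 * a + 1) * t₃)) := by
  rintro ⟨h₀, h₁, h₂, h₃⟩
  have hnorm : l1Norm (corner a ![t₀, t₁, t₂, t₃]) = 2 * (2 * a) + 1 := by
    rw [l1Norm_corner ha fun i ↦ ht _ (by fin_cases i <;> simp)]
    ring
  obtain ⟨i, hi⟩ := h.exists_notMem_uIcc (corner_mem a _) hnorm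
  rw [corner_eq] at hi
  fin_cases i
  exacts [hi h₀, hi h₁, hi h₂, hi h₃]

-- A vanishing coordinate puts `x` in several closed orthants at once, and it may lie in the box of
-- only one of their corners; this is why some sign patterns below need more than one corner.
theorem lt_abs_apply_one_of_apply_two_pos (h : IsHole (coveringLattice a) (2 * a) x) (ha : 1 ≤ a)
    (hx₀ : 0 ≤ x 0) (hx₂ : 0 < x 2) : x 0 < |x 1| := by
  by_contra! hx
  rw [abs_le] at hx
  have hsum := h.sum_abs_eq
  have hle₀ := h.apply_zero_le ha hx₀
  have hle₀₁ := h.apply_zero_add_apply_one_le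
  have hle₂ := h.apply_two_le ha hx₂.le
  have hle₃ := h.apply_three_le ha
  have hge₃ := h.neg.apply_three_le ha
  have hbox := h.notMem_corner_box ha
  simp only [Pi.neg_apply, Set.mem_uIcc] at hge₃ hbox
  rcases lt_or_ge (x 3) 0 with hx₃ | hx₃ <;> rcases le_or_gt (x 1) 0 with hx₁ | hx₁ <;>
    simp only [abs_of_pos, abs_of_neg, abs_of_nonneg, abs_of_nonpos, hx₀, hx₁, hx₂, hx₃] at hsum
  · have := hbox 0 1 0 1 (by decide)
    omega
  · have := hbox 0 0 0 1 (by decide)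
    omega
  · have := hbox 0 0 0 0 (by decide)
    have := hbox 1 0 0 0 (by decide)
    have := hbox 0 1 0 0 (by decide)
    have := hbox 0 1 0 1 (by decide)
    omega
  · have := hbox 0 0 0 0 (by decide)
    have := hbox 0 0 0 1 (by decide)
    omega

theorem lt_abs_apply_one_of_apply_two_nonpos (h : IsHole (coveringLattice a) (2 * a) x)
    (ha : 1 ≤ a) (hx₀ : 0 ≤ x 0) (hx₂ : x 2 ≤ 0) : x 0 < |x 1| := by
  by_contra! hx
  rw [abs_le] at hx
  have hsum := h.sum_abs_eq
  have hle₀ := h.apply_zero_le ha hx₀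
  have hle₀₁ := h.apply_zero_add_apply_one_le
  have hge₂ := h.neg.apply_two_le ha (neg_nonneg.mpr hx₂)
  have hle₃ := h.apply_three_le ha
  have hge₃ := h.neg.apply_three_le ha
  have hbox := h.notMem_corner_box ha
  simp only [Pi.neg_apply, Set.mem_uIcc] at hge₂ hge₃ hbox
  rcases lt_or_ge (x 3) 0 with hx₃ | hx₃ <;> rcases lt_trichotomy (x 1) 0 with hx₁ | hx₁ | hx₁ <;>
    simp only [abs_of_pos, abs_of_neg, abs_of_nonneg, abs_of_nonpos, abs_zero,
      hx₀, hx₁, hx₂, hx₃] at hsum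
  · have := hbox 0 1 1 1 (by decide)
    omega
  · have := hbox 0 1 1 1 (by decide)
    have := hbox 0 0 1 1 (by decide)
    have := hbox 1 0 1 1 (by decide)
    omega
  · have := hbox 0 0 1 1 (by decide)
    omega
  · have := hbox 0 1 0 0 (by decide)
    have := hbox 0 1 1 0 (by decide)
    omega
  · have := hbox 0 0 0 0 (by decide)
    have := hbox 0 0 1 0 (by decide)
    have := hbox 1 0 0 0 (by decide)
    have := hbox 1 0 1 0 (by decide)
    omega
  · have := hbox 0 0 0 0 (by decide)
    have := hbox 0 0 1 0 (by decide)
    have := hbox 0 0 1 1 (by decide)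
    omega

theorem abs_apply_zero_lt_abs_apply_one (h : IsHole (coveringLattice a) (2 * a) x) (ha : 1 ≤ a) :
    |x 0| < |x 1| := by
  wlog hx₀ : 0 ≤ x 0 generalizing x
  · simpa using this h.neg (neg_nonneg.mpr (not_le.mp hx₀).le)
  rw [abs_of_nonneg hx₀]
  rcases lt_or_ge 0 (x 2) with hx₂ | hx₂
  · exact h.lt_abs_apply_one_of_apply_two_pos ha hx₀ hx₂
  · exact h.lt_abs_apply_one_of_apply_two_nonpos ha hx₀ hx₂

end IsHole

theorem not_isHole_coveringLattice {a : ℤ} (ha : 1 ≤ a) (x : Fin 4 → ℤ) :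
    ¬ IsHole (coveringLattice a) (2 * a) x := fun h ↦
  have hswap : IsHole (coveringLattice a) (2 * a) (swap x) :=
    h.map swap l1Norm_swap fun _ ↦ swap_mem a
  lt_asymm (h.abs_apply_zero_lt_abs_apply_one ha) (hswap.abs_apply_zero_lt_abs_apply_one ha)

/-- For even `k ≥ 2`, `a = k/2`, the lattice `L` spanned by the four given vectors
satisfies `S_k + L = ℤ⁴`: every point of `ℤ⁴` is within `l¹`-distance `k` of `L`. -/
theorem lattice_covers_even (k a : ℤ) (hk : 2 ≤ k) (hke : Even k) (ha : a = k / 2)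
    (v₁ v₂ v₃ v₄ : Fin 4 → ℤ)
    (hv₁ : v₁ = ![-a - 1, a + 1, a, -a + 1])
    (hv₂ : v₂ = ![a - 1, a + 1, a + 1, -a])
    (hv₃ : v₃ = ![-a - 1, -a + 1, a + 1, -a])
    (hv₄ : v₄ = ![-a, -a, a, a + 1])
    (L : Submodule ℤ (Fin 4 → ℤ))
    (hL : L = Submodule.span ℤ {v₁, v₂, v₃, v₄}) :
    ∀ x : Fin 4 → ℤ, ∃ w ∈ L,
      |x 0 - w 0| + |x 1 - w 1| + |x 2 - w 2| + |x 3 - w 3| ≤ k := by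
  obtain rfl : k = 2 * a := by have := Int.two_mul_ediv_two_of_even hke; omega
  subst hv₁ hv₂ hv₃ hv₄ hL
  intro x
  have hcover := exists_mem_l1Norm_sub_le (r := 2 * a) (by omega)
    (not_isHole_coveringLattice (by omega)) x
  simpa only [coveringLattice_eq_span, l1Norm_fin_four, Pi.sub_apply] using hcover
end

section
/- Let k ≥ 4 be even, a = k/2, and let L ⊆ ℤ⁴ be the ℤ-span of v₁ = (-a-1, a+1, a, -a+1), v₂ = (a-1, a+1, a+1, -a), v₃ = (-a-1, -a+1, a+1, -a), v₄ = (-a, -a, a, a+1). Then for every x ∈ ℤ⁴ there exists w ∈ L such that every coordinate of x - w has absolute value at most a + 1. -/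
/-!
Every orthant of `ℤ⁴` contains a vector of the lattice with nonzero coordinates, all of absolute
value at most `a + 2`. Subtracting from `x` the one whose signs match those of `x` brings each
coordinate into `[-(a + 1), a + 1]` or decreases its absolute value, so iterating ends in the box.
The value `a + 2` occurs only in `v₅ = v₁ - v₃ + v₄` and `v₇ = v₁ - v₂ - v₃`, and would push a
vanishing coordinate of `x` out of the box; the orthant attributed to such an `x` is chosen so as
to avoid this.
-/

section PullsInward

variable {ι : Type*} {r : ℤ} {x v : ι → ℤ}

/-- Subtracting `v` from `x` moves each coordinate into `[-r, r]` or decreases its absolute value: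
one step of the reduction of `x` to the box of radius `r`. -/
def PullsInward (r : ℤ) (x v : ι → ℤ) : Prop :=
  ∀ i, |x i - v i| ≤ max r (|x i| - 1)

/-- The signs of `v` match those of `x`, a vanishing coordinate of `x` matching both signs, and no
coordinate of `v` overshoots that of `x` by more than `r`. -/
def SignMatched (r : ℤ) (x v : ι → ℤ) : Prop :=
  ∀ i, (0 ≤ x i ∧ 0 < v i ∧ v i ≤ x i + r) ∨ (x i ≤ 0 ∧ v i < 0 ∧ x i - r ≤ v i)

theorem SignMatched.pullsInward (h : SignMatched r x v) : PullsInward r x v := by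
  intro i
  rw [le_max_iff, abs_le]
  rcases h i with ⟨hx, hv, hvx⟩ | ⟨hx, hv, hvx⟩
  · rw [abs_le, abs_of_nonneg hx]
    omega
  · rw [abs_le, abs_of_nonpos hx]
    omega

theorem SignMatched.neg (h : SignMatched r x v) : SignMatched r (-x) (-v) := by
  intro i
  have := h i
  simp only [Pi.neg_apply]
  omega

variable {S : Type*} [SetLike S (ι → ℤ)] [AddSubmonoidClass S (ι → ℤ)] {L : S}

theorem exists_mem_abs_sub_le_max_sub_natCast (hL : ∀ x, ∃ v ∈ L, PullsInward r x v)
    (x : ι → ℤ) (n : ℕ) : ∃ w ∈ L, ∀ i, |x i - w i| ≤ max r (|x i| - n) := by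
  induction n with
  | zero => exact ⟨0, zero_mem L, fun i => by simp⟩
  | succ n ih =>
    obtain ⟨w, hwL, hw⟩ := ih
    obtain ⟨v, hvL, hv⟩ := hL (x - w)
    refine ⟨w + v, add_mem hwL hvL, fun i => ?_⟩
    calc |x i - (w + v) i| = |(x - w) i - v i| := by simp [sub_sub]
      _ ≤ max r (|x i - w i| - 1) := hv i
      _ ≤ max r (max r (|x i| - n) - 1) := by gcongr; exact hw i
      _ ≤ max r (|x i| - (n + 1 : ℕ)) := by omega

theorem exists_mem_abs_sub_le_of_pullsInward [Finite ι]
    (hL : ∀ x, ∃ v ∈ L, PullsInward r x v) (x : ι → ℤ) : ∃ w ∈ L, ∀ i, |x i - w i| ≤ r := by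
  obtain ⟨n, hn⟩ := Finite.exists_le fun i => (|x i| - r).toNat
  obtain ⟨w, hwL, hw⟩ := exists_mem_abs_sub_le_max_sub_natCast hL x n
  refine ⟨w, hwL, fun i => (hw i).trans (max_le le_rfl ?_)⟩
  have := Int.toNat_le.mp (hn i)
  omega

end PullsInward

/-- The lattice `L_k ⊆ ℤ⁴` for even `k`, in terms of `a = k / 2`.
Its generators are called `v₁`, `v₂`, `v₃`, `v₄`, in this order. -/
def evenLattice (a : ℤ) : Submodule ℤ (Fin 4 → ℤ) :=
  Submodule.span ℤ {![-a - 1, a + 1, a, -a + 1], ![a - 1, a + 1, a + 1, -a],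
    ![-a - 1, -a + 1, a + 1, -a], ![-a, -a, a, a + 1]}

namespace evenLattice

theorem v₁_mem (a : ℤ) : ![-a - 1, a + 1, a, -a + 1] ∈ evenLattice a :=
  Submodule.subset_span (by simp)

theorem v₂_mem (a : ℤ) : ![a - 1, a + 1, a + 1, -a] ∈ evenLattice a :=
  Submodule.subset_span (by simp)

theorem v₃_mem (a : ℤ) : ![-a - 1, -a + 1, a + 1, -a] ∈ evenLattice a :=
  Submodule.subset_span (by simp)

theorem v₄_mem (a : ℤ) : ![-a, -a, a, a + 1] ∈ evenLattice a :=
  Submodule.subset_span (by simp)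

theorem v₅_mem (a : ℤ) : ![-a, a, a - 1, a + 2] ∈ evenLattice a := by
  convert add_mem (sub_mem (v₁_mem a) (v₃_mem a)) (v₄_mem a) using 1
  ext i
  fin_cases i <;> dsimp <;> ring

theorem v₆_mem (a : ℤ) : ![-a, a, -a - 1, -a] ∈ evenLattice a := by
  convert sub_mem (sub_mem (v₁_mem a) (v₂_mem a)) (v₄_mem a) using 1
  ext i
  fin_cases i <;> dsimp <;> ring

theorem v₇_mem (a : ℤ) : ![-a + 1, a - 1, -a - 2, a + 1] ∈ evenLattice a := by
  convert sub_mem (sub_mem (v₁_mem a) (v₂_mem a)) (v₃_mem a) using 1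
  ext i
  fin_cases i <;> dsimp <;> ring

theorem v₈_mem (a : ℤ) : ![a, a, a, a + 1] ∈ evenLattice a := by
  convert add_mem (sub_mem (v₂_mem a) (v₃_mem a)) (v₄_mem a) using 1
  ext i
  fin_cases i <;> dsimp <;> ring

theorem exists_mem_signMatched_of_nonneg {a : ℤ} (ha : 2 ≤ a) {x : Fin 4 → ℤ} (hx : 0 ≤ x 0) :
    ∃ v ∈ evenLattice a, SignMatched (a + 1) x v := by
  -- The strict inequalities `0 < x 2` and `x 3 < 0` matter: `-v₇` would overshoot at `x 2 = 0`, and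
  -- `-v₅` at `x 3 = 0`.
  rcases le_or_gt 0 (x 1) with hy | hy <;> rcases le_or_gt (x 2) 0 with hz | hz <;>
    rcases le_or_gt 0 (x 3) with ht | ht
  · exact ⟨_, neg_mem (v₃_mem a), fun i => by fin_cases i <;> dsimp <;> omega⟩
  · exact ⟨_, neg_mem (v₄_mem a), fun i => by fin_cases i <;> dsimp <;> omega⟩
  · exact ⟨_, v₈_mem a, fun i => by fin_cases i <;> dsimp <;> omega⟩
  · exact ⟨_, v₂_mem a, fun i => by fin_cases i <;> dsimp <;> omega⟩
  · exact ⟨_, neg_mem (v₁_mem a), fun i => by fin_cases i <;> dsimp <;> omega⟩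
  · exact ⟨_, neg_mem (v₅_mem a), fun i => by fin_cases i <;> dsimp <;> omega⟩
  · exact ⟨_, neg_mem (v₆_mem a), fun i => by fin_cases i <;> dsimp <;> omega⟩
  · exact ⟨_, neg_mem (v₇_mem a), fun i => by fin_cases i <;> dsimp <;> omega⟩

theorem exists_mem_signMatched {a : ℤ} (ha : 2 ≤ a) (x : Fin 4 → ℤ) :
    ∃ v ∈ evenLattice a, SignMatched (a + 1) x v := by
  rcases le_total 0 (x 0) with hx | hx
  · exact exists_mem_signMatched_of_nonneg ha hx
  · obtain ⟨v, hvL, hv⟩ :=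
      exists_mem_signMatched_of_nonneg (x := -x) ha (Int.neg_nonneg_of_nonpos hx)
    exact ⟨-v, neg_mem hvL, by simpa using hv.neg⟩

end evenLattice

/-- For even `k ≥ 4`, `a = k/2`, every point of `ℤ⁴` can be reduced modulo the
lattice `L` to a point all of whose coordinates have absolute value at most `a + 1`. -/
theorem lattice_reduce_box_even (k a : ℤ) (hk : 4 ≤ k) (hke : Even k) (ha : a = k / 2)
    (v₁ v₂ v₃ v₄ : Fin 4 → ℤ)
    (hv₁ : v₁ = ![-a - 1, a + 1, a, -a + 1])
    (hv₂ : v₂ = ![a - 1, a + 1, a + 1, -a])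
    (hv₃ : v₃ = ![-a - 1, -a + 1, a + 1, -a])
    (hv₄ : v₄ = ![-a, -a, a, a + 1])
    (L : Submodule ℤ (Fin 4 → ℤ))
    (hL : L = Submodule.span ℤ {v₁, v₂, v₃, v₄}) :
    ∀ x : Fin 4 → ℤ, ∃ w ∈ L, ∀ i : Fin 4, |x i - w i| ≤ a + 1 := by
  subst ha hv₁ hv₂ hv₃ hv₄ hL
  have ha : 2 ≤ k / 2 := by omega
  refine exists_mem_abs_sub_le_of_pullsInward (L := evenLattice (k / 2)) fun x => ?_
  obtain ⟨v, hvL, hv⟩ := evenLattice.exists_mem_signMatched ha x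
  exact ⟨v, hvL, hv.pullsInward⟩
end
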